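/- In the conditioned n-bit majority MDP with b ≥ 2: suppose A ⊆ {1, …, n} has |A| = 2^{b−1} − 1 and C(x) = true for every x ∈ {0,1}^n with x_i = (s_reward)_i for all i ∉ A. Then for every x ∈ {0,1}^n with x_i = (s_reward)_i for all i ∉ A, the quantity D = n + 1 − V*((0_b, x)) equals #{i ∈ A : x_i ≠ (s_reward)_i} ∈ {0, …, 2^{b−1} − 1}, and bit number b−2 of D (the most significant bit of its (b−1)-bit binary representation, i.e., Nat.testBit D (b−2)) equals 1 if and only if D > |A|/2, that is, if and only if a majority of the indices i ∈ A satisfy x_i ≠ (s_reward)_i. -/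

import Mathlib

/-!
Write `n = 2^b − 1` and `D = d(x, sr)`. Every step either applies `f` to the control bits or flips
at most one representation bit, so a state reached at time `t` has control bits `f^[k] 0` for some
`k` with `k + d(x, y) ≤ t`, where `y` is its representation. The iterates `f^[1] 0, …, f^[n] 0`
enumerate the `n` nonzero strings without repetition and `1_b` is a fixed point, hence
`f^[k] 0 = 1_b` exactly when `n ≤ k` (`iterate_eq_oneStr_iff`). So the reward state cannot be
visited before time `n + D`, which gives `V* ≤ n + 1 − D` (`card_visits_le`).

The bound is attained by the greedy policy that flips the addressed bit exactly when it is wrong.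
It only ever corrects bits of `A`, so the condition `C` holds throughout, and each of its steps
either advances the control bits past a correct bit or reduces the distance to `sr` by one
(`exists_greedy_invariant`). By time `n + D` all `D` corrections and all `n` control moves have been
made, and the reward state is occupied from then on (`greedyState_eq`). Therefore
`n + 1 − V* = D`, and as `D < 2^(b−1)`, its bit `b − 2` is set iff `2^(b−2) ≤ D`, where
`2^(b−2) − 1 = |A| / 2`.
-/

/-- The all-false (all-zero) bit string of length `ℓ`. -/
def zeroStr (ℓ : ℕ) : Fin ℓ → Bool := fun _ => false

/-- The all-true (all-one) bit string of length `ℓ`. -/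
def oneStr (ℓ : ℕ) : Fin ℓ → Bool := fun _ => true

/-- `f` is a control function over `{0,1}^b`: it fixes the all-one string, and the
iterates `f^(k)(0_b)` for `k = 1, …, 2^b − 1` cover exactly `{0,1}^b ∖ {0_b}`. -/
def IsControlFunc (b : ℕ) (f : (Fin b → Bool) → (Fin b → Bool)) : Prop :=
  f (oneStr b) = oneStr b ∧
    (fun k => f^[k] (zeroStr b)) '' Set.Icc 1 (2 ^ b - 1) = {v | v ≠ zeroStr b}

/-- The value of a length-`b` bit string as a most-significant-bit-first binary number. -/
def bitVal {b : ℕ} (c : Fin b → Bool) : ℕ :=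
  ∑ j : Fin b, if c j then 2 ^ (b - 1 - (j : ℕ)) else 0

/-- The Hamming distance between two bit strings. -/
def hammDist {n : ℕ} (x y : Fin n → Bool) : ℕ :=
  (Finset.univ.filter fun i => x i ≠ y i).card

/-- The transition of the conditioned `n`-bit majority MDP (`n = 2^b − 1`): on
action `1` with nonzero control bits and satisfied condition `C`, flip the
`val(c)`-th (1-indexed) representation bit; otherwise apply the control function
to the control bits. -/
def majStepC (b : ℕ) (f : (Fin b → Bool) → (Fin b → Bool))
    (C : (Fin (2 ^ b - 1) → Bool) → Bool)
    (s : (Fin b → Bool) × (Fin (2 ^ b - 1) → Bool)) (a : Bool) :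
    (Fin b → Bool) × (Fin (2 ^ b - 1) → Bool) :=
  if a = true ∧ s.1 ≠ zeroStr b ∧ C s.2 = true then
    (s.1, fun i => if (i : ℕ) + 1 = bitVal s.1 then !(s.2 i) else s.2 i)
  else (f s.1, s.2)

/-- The trajectory induced by an action sequence `a`: `majTrajC b f C s a 0 = s`
(this is `s_1`) and `majTrajC b f C s a t` is the state `s_{t+1}`. -/
def majTrajC (b : ℕ) (f : (Fin b → Bool) → (Fin b → Bool))
    (C : (Fin (2 ^ b - 1) → Bool) → Bool)
    (s : (Fin b → Bool) × (Fin (2 ^ b - 1) → Bool)) (a : ℕ → Bool) :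
    ℕ → (Fin b → Bool) × (Fin (2 ^ b - 1) → Bool)
  | 0 => s
  | t + 1 => majStepC b f C (majTrajC b f C s a t) (a t)

/-- The optimal value of the conditioned majority MDP with horizon `H = 2^b + n`:
the maximal, over action sequences, number of time steps `t ∈ {1, …, H}` with
`s_t = (1_b, s_reward)`. -/
noncomputable def majVC (b : ℕ) (f : (Fin b → Bool) → (Fin b → Bool))
    (C : (Fin (2 ^ b - 1) → Bool) → Bool) (sr : Fin (2 ^ b - 1) → Bool)
    (s : (Fin b → Bool) × (Fin (2 ^ b - 1) → Bool)) : ℕ :=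
  sSup {v | ∃ a : ℕ → Bool,
    v = ((Finset.range (2 ^ b + (2 ^ b - 1))).filter
          fun t => majTrajC b f C s a t = (oneStr b, sr)).card}

theorem iterate_eq_oneStr_iff {b : ℕ} (hb : 2 ≤ b) {f : (Fin b → Bool) → (Fin b → Bool)}
    (hf : IsControlFunc b f) (k : ℕ) :
    f^[k] (zeroStr b) = oneStr b ↔ 2 ^ b - 1 ≤ k := by
  obtain ⟨h1, h2⟩ := hf
  have h01 : oneStr b ≠ zeroStr b := by
    intro h
    have := congrFun h ⟨0, by omega⟩
    simp [oneStr, zeroStr] at this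
  have mono : ∀ k m, f^[k] (zeroStr b) = oneStr b → k ≤ m → f^[m] (zeroStr b) = oneStr b := by
    intro k m hk hkm
    obtain ⟨d, rfl⟩ := Nat.exists_eq_add_of_le' hkm
    rw [Function.iterate_add_apply, hk, Function.iterate_fixed h1]
  constructor
  · intro hk
    by_contra! hlt
    have hk0 : 1 ≤ k := by
      rcases Nat.eq_zero_or_pos k with rfl | h
      · exact absurd hk.symm h01
      · exact h
    -- If `1_b` were reached early, the iterates would take at most `k < n` values.
    have hsub : (Finset.univ.erase (zeroStr b)) ⊆
        (Finset.Icc 1 k).image (fun j => f^[j] (zeroStr b)) := by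
      intro v hv
      have hv' : v ∈ {v | v ≠ zeroStr b} := by simpa using hv
      rw [← h2] at hv'
      obtain ⟨j, ⟨hj1, -⟩, rfl⟩ := hv'
      rw [Finset.mem_image]
      rcases le_total j k with hjk | hjk
      · exact ⟨j, Finset.mem_Icc.2 ⟨hj1, hjk⟩, rfl⟩
      · exact ⟨k, Finset.mem_Icc.2 ⟨hk0, le_rfl⟩, hk.trans (mono k j hk hjk).symm⟩
    have hc := (Finset.card_le_card hsub).trans Finset.card_image_le
    rw [Finset.card_erase_of_mem (Finset.mem_univ _)] at hc
    simp at hc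
    omega
  · intro hk
    have hv' : oneStr b ∈ {v | v ≠ zeroStr b} := h01
    rw [← h2] at hv'
    obtain ⟨j, ⟨-, hj⟩, hj'⟩ := hv'
    exact mono j k hj' (hj.trans hk)

theorem exists_bitVal_eq (b : ℕ) : ∀ m < 2 ^ b, ∃ c : Fin b → Bool, bitVal c = m := by
  induction b with
  | zero => intro m hm; exact ⟨fun _ => false, by simp at hm; simp [bitVal, hm]⟩
  | succ b ih =>
    have hcons : ∀ (a : Bool) (c : Fin b → Bool),
        bitVal (Fin.cons a c : Fin (b + 1) → Bool) = (if a then 2 ^ b else 0) + bitVal c := by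
      intro a c
      unfold bitVal
      rw [Fin.sum_univ_succ]
      congr 1
      refine Finset.sum_congr rfl fun j _ => ?_
      rw [Fin.cons_succ, Fin.val_succ, show b + 1 - 1 - ((j : ℕ) + 1) = b - 1 - j by omega]
    intro m hm
    rw [pow_succ] at hm
    rcases lt_or_ge m (2 ^ b) with h | h
    · obtain ⟨c, hc⟩ := ih m h
      exact ⟨Fin.cons false c, by rw [hcons]; simpa using hc⟩
    · obtain ⟨c, hc⟩ := ih (m - 2 ^ b) (by omega)
      exact ⟨Fin.cons true c, by rw [hcons, hc]; simp; omega⟩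

theorem bitVal_zeroStr (b : ℕ) : bitVal (zeroStr b) = 0 := by
  simp [bitVal, zeroStr]

/-- Every representation bit is addressed by one of the first `2^b − 1` iterates of `f`. -/
theorem exists_iterate_address {b : ℕ} {f : (Fin b → Bool) → (Fin b → Bool)}
    (hf : IsControlFunc b f) (i : Fin (2 ^ b - 1)) :
    ∃ j, 1 ≤ j ∧ j ≤ 2 ^ b - 1 ∧ (i : ℕ) + 1 = bitVal (f^[j] (zeroStr b)) := by
  obtain ⟨c, hc⟩ := exists_bitVal_eq b (i + 1) (by have := i.2; omega)
  have hc0 : c ∈ {v | v ≠ zeroStr b} := by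
    rintro rfl
    rw [bitVal_zeroStr] at hc
    omega
  rw [← hf.2] at hc0
  obtain ⟨j, ⟨h1, h2⟩, rfl⟩ := hc0
  exact ⟨j, h1, h2, hc.symm⟩

/-- A transition either advances the control bits or moves the representation by distance at
most one. -/
theorem majStepC_cases {b : ℕ} (f : (Fin b → Bool) → (Fin b → Bool))
    (C : (Fin (2 ^ b - 1) → Bool) → Bool)
    (s : (Fin b → Bool) × (Fin (2 ^ b - 1) → Bool)) (a : Bool) :
    majStepC b f C s a = (f s.1, s.2) ∨
      ((majStepC b f C s a).1 = s.1 ∧ hammingDist s.2 (majStepC b f C s a).2 ≤ 1) := by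
  unfold majStepC
  split_ifs with h
  · right
    refine ⟨rfl, ?_⟩
    unfold hammingDist
    rw [Finset.card_le_one]
    intro i hi j hj
    simp only [Finset.mem_filter, Finset.mem_univ, true_and] at hi hj
    have hi' : (i : ℕ) + 1 = bitVal s.1 := by by_contra h'; simp [h'] at hi
    have hj' : (j : ℕ) + 1 = bitVal s.1 := by by_contra h'; simp [h'] at hj
    exact Fin.ext (by omega)
  · exact Or.inl rfl

theorem exists_majTrajC_bound {b : ℕ} (f : (Fin b → Bool) → (Fin b → Bool))
    (C : (Fin (2 ^ b - 1) → Bool) → Bool) (x : Fin (2 ^ b - 1) → Bool) (a : ℕ → Bool) (t : ℕ) :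
    ∃ k, (majTrajC b f C (zeroStr b, x) a t).1 = f^[k] (zeroStr b) ∧
      k + hammingDist x (majTrajC b f C (zeroStr b, x) a t).2 ≤ t := by
  induction t with
  | zero => exact ⟨0, rfl, by simp [majTrajC]⟩
  | succ t ih =>
    obtain ⟨k, hk, hle⟩ := ih
    rcases majStepC_cases f C (majTrajC b f C (zeroStr b, x) a t) (a t) with h | ⟨h1, h2⟩
    · refine ⟨k + 1, ?_, ?_⟩
      · rw [majTrajC, h, hk, Function.iterate_succ_apply']
      · rw [majTrajC, h]
        dsimp only
        omega
    · refine ⟨k, h1.trans hk, ?_⟩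
      have := hammingDist_triangle x (majTrajC b f C (zeroStr b, x) a t).2
        (majStepC b f C (majTrajC b f C (zeroStr b, x) a t) (a t)).2
      rw [majTrajC]
      omega

/-- Upper bound on the return of any action sequence: the reward state is not visited before time
`n + d(x, sr)`. -/
theorem card_visits_le {b : ℕ} (hb : 2 ≤ b) {f : (Fin b → Bool) → (Fin b → Bool)}
    (hf : IsControlFunc b f) (C : (Fin (2 ^ b - 1) → Bool) → Bool)
    (sr x : Fin (2 ^ b - 1) → Bool) (a : ℕ → Bool) :
    ((Finset.range (2 ^ b + (2 ^ b - 1))).filter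
      fun t => majTrajC b f C (zeroStr b, x) a t = (oneStr b, sr)).card
      ≤ 2 ^ b - hammingDist x sr := by
  have hsub : ((Finset.range (2 ^ b + (2 ^ b - 1))).filter
      fun t => majTrajC b f C (zeroStr b, x) a t = (oneStr b, sr)) ⊆
      Finset.Ico (2 ^ b - 1 + hammingDist x sr) (2 ^ b + (2 ^ b - 1)) := by
    intro t ht
    rw [Finset.mem_filter, Finset.mem_range] at ht
    obtain ⟨k, hk, hle⟩ := exists_majTrajC_bound f C x a t
    rw [ht.2] at hk hle
    have := (iterate_eq_oneStr_iff hb hf k).1 hk.symm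
    dsimp only at hle
    rw [Finset.mem_Ico]
    omega
  refine (Finset.card_le_card hsub).trans ?_
  rw [Nat.card_Ico]
  omega

/-- The greedy policy towards `sr`: act exactly when the bit addressed by the control bits
disagrees with `sr`. -/
def greedyAct {b : ℕ} (sr : Fin (2 ^ b - 1) → Bool)
    (s : (Fin b → Bool) × (Fin (2 ^ b - 1) → Bool)) : Bool :=
  decide (∃ i : Fin (2 ^ b - 1), (i : ℕ) + 1 = bitVal s.1 ∧ s.2 i ≠ sr i)

/-- The state reached after `t` steps of the greedy policy. -/
def greedyState {b : ℕ} (f : (Fin b → Bool) → (Fin b → Bool))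
    (C : (Fin (2 ^ b - 1) → Bool) → Bool) (sr x : Fin (2 ^ b - 1) → Bool) (t : ℕ) :
    (Fin b → Bool) × (Fin (2 ^ b - 1) → Bool) :=
  (fun s => majStepC b f C s (greedyAct sr s))^[t] (zeroStr b, x)

theorem greedyState_succ {b : ℕ} (f : (Fin b → Bool) → (Fin b → Bool))
    (C : (Fin (2 ^ b - 1) → Bool) → Bool) (sr x : Fin (2 ^ b - 1) → Bool) (t : ℕ) :
    greedyState f C sr x (t + 1) =
      majStepC b f C (greedyState f C sr x t) (greedyAct sr (greedyState f C sr x t)) :=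
  Function.iterate_succ_apply' _ _ _

theorem majTrajC_greedy {b : ℕ} (f : (Fin b → Bool) → (Fin b → Bool))
    (C : (Fin (2 ^ b - 1) → Bool) → Bool) (sr x : Fin (2 ^ b - 1) → Bool) (t : ℕ) :
    majTrajC b f C (zeroStr b, x) (fun t => greedyAct sr (greedyState f C sr x t)) t =
      greedyState f C sr x t := by
  induction t with
  | zero => rfl
  | succ t ih => rw [majTrajC, ih, greedyState_succ]

/-- Invariant of the greedy policy: after `t` steps, of which `k` advanced the control bits, the
other `t - k` steps each removed one disagreement with `sr`, and all bits addressed before the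
current one agree with `sr`. -/
theorem exists_greedy_invariant {b : ℕ} (f : (Fin b → Bool) → (Fin b → Bool))
    (C : (Fin (2 ^ b - 1) → Bool) → Bool) (sr : Fin (2 ^ b - 1) → Bool)
    (A : Finset (Fin (2 ^ b - 1)))
    (hA : ∀ x : Fin (2 ^ b - 1) → Bool, (∀ i ∉ A, x i = sr i) → C x = true)
    (x : Fin (2 ^ b - 1) → Bool) (hx : ∀ i ∉ A, x i = sr i) (t : ℕ) :
    ∃ k, (greedyState f C sr x t).1 = f^[k] (zeroStr b) ∧
      t + hammingDist (greedyState f C sr x t).2 sr = k + hammingDist x sr ∧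
      (∀ i ∉ A, (greedyState f C sr x t).2 i = sr i) ∧
      ∀ j < k, ∀ i : Fin (2 ^ b - 1), (i : ℕ) + 1 = bitVal (f^[j] (zeroStr b)) →
        (greedyState f C sr x t).2 i = sr i := by
  induction t with
  | zero => exact ⟨0, rfl, by simp [greedyState], hx, by simp⟩
  | succ t ih =>
    rw [greedyState_succ]
    generalize greedyState f C sr x t = s at ih ⊢
    obtain ⟨c, y⟩ := s
    obtain ⟨k, hk, hd, hyA, hy⟩ := ih
    dsimp only at hk hd hyA hy
    by_cases hex : ∃ i : Fin (2 ^ b - 1), (i : ℕ) + 1 = bitVal c ∧ y i ≠ sr i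
    · have hact : greedyAct sr (c, y) = true := by simpa [greedyAct] using hex
      obtain ⟨i, hi, hne⟩ := hex
      have hc0 : c ≠ zeroStr b := by
        rintro rfl
        rw [bitVal_zeroStr] at hi
        omega
      -- Flipping the wrong bit `i` amounts to overwriting it by the value in `sr`.
      have hstep : majStepC b f C (c, y) (greedyAct sr (c, y)) =
          (c, Function.update y i (sr i)) := by
        rw [hact, majStepC, if_pos ⟨rfl, hc0, hA y hyA⟩]
        refine Prod.ext rfl (funext fun j => ?_)
        by_cases hj : j = i
        · subst hj
          simp only [hi, if_true, Function.update_self]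
          cases h1 : y j <;> cases h2 : sr j <;> simp_all
        · have : ¬ ((j : ℕ) + 1 = bitVal c) := fun h => hj (Fin.ext (by omega))
          simp [this, hj]
      have hkeep : ∀ j, y j = sr j → Function.update y i (sr i) j = sr j := by
        intro j hj
        by_cases hji : j = i
        · subst hji; simp
        · simpa [hji] using hj
      have hdist : hammingDist (Function.update y i (sr i)) sr + 1 = hammingDist y sr := by
        unfold hammingDist
        have : (Finset.univ.filter fun j => Function.update y i (sr i) j ≠ sr j) =
            (Finset.univ.filter fun j => y j ≠ sr j).erase i := by
          ext j
          by_cases hji : j = i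
          · subst hji; simp
          · simp [hji]
        rw [this, Finset.card_erase_add_one (by simpa using hne)]
      rw [hstep]
      refine ⟨k, hk, ?_, fun j hj => hkeep j (hyA j hj), fun j hj l hl => hkeep l (hy j hj l hl)⟩
      dsimp only
      omega
    · have hact : greedyAct sr (c, y) = false := by simpa [greedyAct] using hex
      have hstep : majStepC b f C (c, y) (greedyAct sr (c, y)) = (f c, y) := by
        rw [hact, majStepC, if_neg (by simp)]
      rw [hstep]
      refine ⟨k + 1, ?_, ?_, hyA, ?_⟩
      · rw [hk, Function.iterate_succ_apply']
      · dsimp only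
        omega
      · intro j hj i hi
        rcases Nat.lt_succ_iff_lt_or_eq.1 hj with h | rfl
        · exact hy j h i hi
        · by_contra hne
          exact hex ⟨i, by rw [hk]; exact hi, hne⟩

theorem greedyState_eq {b : ℕ} (hb : 2 ≤ b) {f : (Fin b → Bool) → (Fin b → Bool)}
    (hf : IsControlFunc b f)
    (C : (Fin (2 ^ b - 1) → Bool) → Bool) (sr : Fin (2 ^ b - 1) → Bool)
    (A : Finset (Fin (2 ^ b - 1)))
    (hA : ∀ x : Fin (2 ^ b - 1) → Bool, (∀ i ∉ A, x i = sr i) → C x = true)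
    (x : Fin (2 ^ b - 1) → Bool) (hx : ∀ i ∉ A, x i = sr i) (t : ℕ)
    (ht : 2 ^ b - 1 + hammingDist x sr ≤ t) :
    greedyState f C sr x t = (oneStr b, sr) := by
  obtain ⟨k, hk, hd, -, hy⟩ := exists_greedy_invariant f C sr A hA x hx t
  have hkn : 2 ^ b - 1 ≤ k := by omega
  refine Prod.ext (hk.trans ((iterate_eq_oneStr_iff hb hf k).2 hkn)) ?_
  -- For `k = n` the last addressed bit may be pending, but then all `D` corrections are done;
  -- for `k > n` every bit has been passed.
  rcases hkn.eq_or_lt with h | h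
  · exact hammingDist_eq_zero.1 (by dsimp only; omega)
  · funext i
    obtain ⟨j, -, hj, hi⟩ := exists_iterate_address hf i
    exact hy j (by omega) i hi

theorem majVC_eq {b : ℕ} (hb : 2 ≤ b) {f : (Fin b → Bool) → (Fin b → Bool)}
    (hf : IsControlFunc b f)
    (C : (Fin (2 ^ b - 1) → Bool) → Bool) (sr : Fin (2 ^ b - 1) → Bool)
    (A : Finset (Fin (2 ^ b - 1)))
    (hA : ∀ x : Fin (2 ^ b - 1) → Bool, (∀ i ∉ A, x i = sr i) → C x = true)
    (x : Fin (2 ^ b - 1) → Bool) (hx : ∀ i ∉ A, x i = sr i) :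
    majVC b f C sr (zeroStr b, x) = 2 ^ b - hammingDist x sr := by
  refine IsGreatest.csSup_eq ⟨⟨fun t => greedyAct sr (greedyState f C sr x t), ?_⟩, ?_⟩
  · refine le_antisymm ?_ (card_visits_le hb hf C sr x _)
    have hsub : Finset.Ico (2 ^ b - 1 + hammingDist x sr) (2 ^ b + (2 ^ b - 1)) ⊆
        (Finset.range (2 ^ b + (2 ^ b - 1))).filter fun t =>
          majTrajC b f C (zeroStr b, x) (fun t => greedyAct sr (greedyState f C sr x t)) t =
            (oneStr b, sr) := by
      intro t ht
      rw [Finset.mem_Ico] at ht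
      rw [Finset.mem_filter, Finset.mem_range, majTrajC_greedy]
      exact ⟨ht.2, greedyState_eq hb hf C sr A hA x hx t ht.1⟩
    refine le_trans ?_ (Finset.card_le_card hsub)
    rw [Nat.card_Ico]
    omega
  · rintro v ⟨a, rfl⟩
    exact card_visits_le hb hf C sr x a

/-- For `b ≥ 2` and `|A| = 2^{b−1} − 1`, if `C(x) = true` for every `x` agreeing with
`s_reward` outside `A`, then for such `x` the quantity `D = n + 1 − V*((0_b, x))`
equals `#{i ∈ A : x_i ≠ (s_reward)_i} ∈ {0, …, 2^{b−1} − 1}`, and bit `b − 2` of `D`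
(the most significant bit of its `(b−1)`-bit representation) is `1` iff `D > |A|/2`,
i.e. iff a majority of the indices `i ∈ A` satisfy `x_i ≠ (s_reward)_i`. -/
theorem majMDPC_value_msb_is_majority (b : ℕ) (hb : 2 ≤ b)
    (f : (Fin b → Bool) → (Fin b → Bool)) (hf : IsControlFunc b f)
    (sr : Fin (2 ^ b - 1) → Bool) (C : (Fin (2 ^ b - 1) → Bool) → Bool)
    (A : Finset (Fin (2 ^ b - 1))) (hCard : A.card = 2 ^ (b - 1) - 1)
    (hA : ∀ x : Fin (2 ^ b - 1) → Bool, (∀ i ∉ A, x i = sr i) → C x = true)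
    (x : Fin (2 ^ b - 1) → Bool) (hx : ∀ i ∉ A, x i = sr i) :
    (2 ^ b - 1) + 1 - majVC b f C sr (zeroStr b, x)
      = (A.filter fun i => x i ≠ sr i).card ∧
    (2 ^ b - 1) + 1 - majVC b f C sr (zeroStr b, x) ≤ 2 ^ (b - 1) - 1 ∧
    (Nat.testBit ((2 ^ b - 1) + 1 - majVC b f C sr (zeroStr b, x)) (b - 2) = true ↔
      A.card / 2 < (2 ^ b - 1) + 1 - majVC b f C sr (zeroStr b, x)) := by
  have hdist : hammingDist x sr = (A.filter fun i => x i ≠ sr i).card := by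
    unfold hammingDist
    congr 1
    ext i
    simp only [Finset.mem_filter, Finset.mem_univ, true_and]
    exact ⟨fun h => ⟨by_contra fun hi => h (hx i hi), h⟩, fun h => h.2⟩
  have hle : (A.filter fun i => x i ≠ sr i).card ≤ 2 ^ (b - 1) - 1 :=
    hCard ▸ Finset.card_filter_le _ _
  have hD : (2 ^ b - 1) + 1 - majVC b f C sr (zeroStr b, x)
      = (A.filter fun i => x i ≠ sr i).card := by
    rw [majVC_eq hb hf C sr A hA x hx, hdist]
    have : 2 ^ (b - 1) ≤ 2 ^ b := Nat.pow_le_pow_right (by norm_num) (by omega)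
    have : 0 < 2 ^ (b - 1) := by positivity
    omega
  rw [hD]
  refine ⟨rfl, hle, ?_⟩
  generalize (A.filter fun i => x i ≠ sr i).card = D at hle ⊢
  obtain ⟨m, rfl⟩ := Nat.exists_eq_add_of_le' hb
  rw [hCard]
  rw [show m + 2 - 1 = m + 1 by omega, pow_succ] at hle ⊢
  rw [show m + 2 - 2 = m by omega]
  have hpos : 0 < 2 ^ m := by positivity
  constructor
  · intro h
    have := Nat.ge_two_pow_of_testBit h
    omega
  · intro h
    have hdiv : D / 2 ^ m = 1 := by
      rw [Nat.div_eq_iff hpos]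
      omega
    simp [Nat.testBit_eq_decide_div_mod_eq, hdiv]
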